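/- Let p ∈ (0,1) be fixed, let m ≥ 5 be a fixed integer, and let ℓ = ℓ(n) be divisible by m−2 with c₁·n/ln n ≤ ℓ(n) ≤ c₂·n/ln n for some constants c₂ ≥ c₁ > 0. Then with high probability (as n→∞) the binomial random graph G(ℓ(n), p) contains an induced C_{m−2}-factor, i.e., its vertex set can be partitioned into ℓ(n)/(m−2) sets each inducing a cycle on m−2 vertices. -/

import Mathlib

open MeasureTheory Filter Real

/-- The index type of potential edges of a graph on `Fin n`. -/
abbrev EdgeType (n : ℕ) := {e : Sym2 (Fin n) // ¬ e.IsDiag}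

/-- The product Bernoulli measure on edge-indicator functions: the binomial
random graph `G(n,p)`. -/
noncomputable def erMeasure (n : ℕ) (p : ℝ) : Measure (EdgeType n → Bool) :=
  Measure.pi fun _ => (PMF.bernoulli (min (Real.toNNReal p) 1) (min_le_right _ _)).toMeasure

/-- The simple graph determined by an edge-indicator function. -/
def graphOf {n : ℕ} (ω : EdgeType n → Bool) : SimpleGraph (Fin n) :=
  SimpleGraph.fromEdgeSet {e | ∃ h : ¬ e.IsDiag, ω ⟨e, h⟩ = true}

/-- `H` contains a (not necessarily induced) copy of `F`. -/
def ContainsCopy {α β : Type*} (F : SimpleGraph α) (H : SimpleGraph β) : Prop :=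
  ∃ f : α → β, Function.Injective f ∧ ∀ ⦃a b⦄, F.Adj a b → H.Adj (f a) (f b)

/-- `H` is `F`-saturated in `G`: `H` is a spanning subgraph of `G` that is `F`-free,
and adding any edge of `G` missing from `H` creates a copy of `F`. -/
def IsSaturatedIn {V : Type*} {α : Type*} (G H : SimpleGraph V) (F : SimpleGraph α) : Prop :=
  H ≤ G ∧ ¬ ContainsCopy F H ∧
    ∀ v w : V, G.Adj v w → ¬ H.Adj v w →
      ContainsCopy F (H ⊔ SimpleGraph.fromEdgeSet {s(v, w)})

/-- The saturation number `sat(G,F)`: the minimum number of edges of an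
`F`-saturated spanning subgraph of `G`. -/
noncomputable def satNum {V α : Type*} (G : SimpleGraph V) (F : SimpleGraph α) : ℕ :=
  sInf {k | ∃ H : SimpleGraph V, IsSaturatedIn G H F ∧ H.edgeSet.ncard = k}

/-- The cycle `C_m`, as a graph on `ZMod m`. -/
def cycGraph (m : ℕ) : SimpleGraph (ZMod m) :=
  SimpleGraph.fromRel (fun a b => a = b + 1)

/-- A `v`-factor in a graph `Γ` on `Fin n`, given by `ℓ` stars with centers `c i`
and leaf sets `L i`: the stars are induced, pairwise vertex-disjoint, their
centers are adjacent to `v`, and their vertex sets partition `[n] ∖ {v}`. -/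
def IsStarFactor {n : ℕ} (Γ : SimpleGraph (Fin n)) (v : Fin n) (ℓ : ℕ)
    (c : Fin ℓ → Fin n) (L : Fin ℓ → Set (Fin n)) : Prop :=
  (∀ i, Γ.Adj v (c i)) ∧
  (∀ i, c i ∉ L i) ∧
  (∀ i, ∀ x ∈ L i, Γ.Adj (c i) x) ∧
  (∀ i, (L i).Pairwise fun x y => ¬ Γ.Adj x y) ∧
  (Set.univ : Set (Fin ℓ)).PairwiseDisjoint (fun i => insert (c i) (L i)) ∧
  (⋃ i, insert (c i) (L i)) = {v}ᶜ

/-- The set `C` carries an induced `C_k`-factor in `Γ`: `C` can be partitioned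
into parts, each inducing (in `Γ`) a copy of the cycle on `k` vertices. -/
def HasInducedCycleFactorOn {n : ℕ} (Γ : SimpleGraph (Fin n)) (k : ℕ)
    (C : Set (Fin n)) : Prop :=
  ∃ (t : ℕ) (g : Fin t → ZMod k → Fin n),
    (∀ i, Function.Injective (g i)) ∧
    (Set.univ : Set (Fin t)).PairwiseDisjoint (fun i => Set.range (g i)) ∧
    (⋃ i, Set.range (g i)) = C ∧
    ∀ i a b, Γ.Adj (g i a) (g i b) ↔ (cycGraph k).Adj a b

/-!
Arrange the vertices in an array with one column per vertex of `H` and `t` rows; it suffices to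
permute the columns so that every row spans an induced copy of `H`. The columns are treated one at
a time. Permutations that make all rows of the columns in `J` correct can be selected by looking
only at edges inside `J`, so the selection is independent of the edges from `J` to the next
column `b`. Extending it to `b` amounts to finding a perfect matching between the rows and the
vertices of column `b` in a random bipartite graph whose edges are absent independently, each with
probability at most some `y < 1`. By Hall's theorem a failure forces an `s × (t + 1 - s)` rectangle
of absent edges, and a union bound gives failure probability at most `t ^ 3 * y ^ (t / 2)`. The
number of columns is fixed, so the total failure probability is `o(1)`.
-/

open ProbabilityTheory Function Finset

section Independence

variable {ι : Type*} {X : ι → Type*} [∀ i, MeasurableSpace (X i)]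

lemma exists_measurableSet_restrict_preimage_eq [∀ i, Nonempty (X i)] {A : Set (∀ i, X i)}
    {S : Finset ι} (hA : MeasurableSet A) (hAS : DependsOn (· ∈ A) S) :
    ∃ C, MeasurableSet C ∧ S.restrict ⁻¹' C = A := by
  classical
  let extend (z : ∀ i : S, X i) (i : ι) : X i :=
    if h : i ∈ S then z ⟨i, h⟩ else Classical.arbitrary (X i)
  have hextend : Measurable extend := by
    refine measurable_pi_iff.2 fun i => ?_
    by_cases h : i ∈ S
    · simpa only [extend, dif_pos h] using measurable_pi_apply _
    · simp only [extend, dif_neg h, measurable_const]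
  refine ⟨extend ⁻¹' A, hextend hA, Set.ext fun ω => ?_⟩
  exact iff_of_eq (hAS fun i (hi : i ∈ S) => dif_pos hi)

lemma dependsOn_eqOn {Y : Type*} (c : ι → Y) (E : Set ι) :
    DependsOn (fun ω : ι → Y => Set.EqOn ω c E) E :=
  fun _ _ h => propext (forall₂_congr fun i hi => by rw [h i hi])

variable [Fintype ι] {μ : ∀ i, Measure (X i)} [∀ i, IsProbabilityMeasure (μ i)]

lemma indepSet_pi_of_dependsOn {A B : Set (∀ i, X i)} {S T : Set ι}
    (hA : MeasurableSet A) (hB : MeasurableSet B) (hAS : DependsOn (· ∈ A) S)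
    (hBT : DependsOn (· ∈ B) T) (hST : Disjoint S T) : IndepSet A B (Measure.pi μ) := by
  classical
  have (i : ι) : Nonempty (X i) := (μ i).nonempty_of_neZero
  obtain ⟨C, hC, rfl⟩ := exists_measurableSet_restrict_preimage_eq (S := S.toFinset) hA (by simpa)
  obtain ⟨D, hD, rfl⟩ := exists_measurableSet_restrict_preimage_eq (S := T.toFinset) hB (by simpa)
  have hindep : iIndepFun (fun i (ω : ∀ i, X i) => ω i) (Measure.pi μ) :=
    iIndepFun_pi (X := fun _ x => x) fun _ => aemeasurable_id
  have hrestrict := hindep.indepFun_finset S.toFinset T.toFinset (by simpa) measurable_pi_apply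
  exact (indepSet_iff_measure_inter_eq_mul hA hB _).2
    (hrestrict.measure_inter_preimage_eq_mul C D hC hD)

lemma iIndepSet_pi_of_dependsOn {κ : Type*} {A : κ → Set (∀ i, X i)} {S : κ → Set ι}
    (hA : ∀ k, MeasurableSet (A k)) (hAS : ∀ k, DependsOn (· ∈ A k) (S k))
    (hS : Pairwise (Disjoint on S)) : iIndepSet A (Measure.pi μ) := by
  classical
  refine (iIndepSet_iff_meas_biInter hA).2 fun F => ?_
  induction F using Finset.induction_on with
  | empty => simp
  | insert k F hk ih =>
    have hFS : DependsOn (· ∈ ⋂ l ∈ F, A l) (⋃ l ∈ F, S l) := by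
      intro ω ω' h
      simp only [Set.mem_iInter]
      exact propext <| forall₂_congr fun l hl =>
        iff_of_eq (hAS l fun i hi => h i (Set.mem_biUnion (t := S) (Finset.mem_coe.2 hl) hi))
    have hdisj : Disjoint (S k) (⋃ l ∈ F, S l) :=
      Set.disjoint_iUnion₂_right.2 fun l hl => hS (ne_of_mem_of_not_mem hl hk).symm
    rw [Finset.set_biInter_insert, Finset.prod_insert hk, ← ih]
    exact (indepSet_pi_of_dependsOn (hA k) (F.measurableSet_biInter fun l _ => hA l) (hAS k) hFS
      hdisj).measure_inter_eq_mul

lemma measureReal_pi_not_eqOn_le {Y : Type*} [MeasurableSpace Y] [MeasurableSingletonClass Y]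
    {ν : ι → Measure Y} [∀ i, IsProbabilityMeasure (ν i)] {c : ι → Y} {a : ℝ} (ha0 : 0 ≤ a)
    (ha1 : a ≤ 1) (hac : ∀ i, a ≤ (ν i).real {c i}) {E : Set ι} {k : ℕ} (hE : E.ncard ≤ k) :
    (Measure.pi ν).real {ω | ¬ Set.EqOn ω c E} ≤ 1 - a ^ k := by
  classical
  have hmeas : MeasurableSet {ω : ι → Y | Set.EqOn ω c E} :=
    MeasurableSet.pi E.to_countable fun i _ => measurableSet_singleton (c i)
  have hbox : (Measure.pi ν).real {ω | Set.EqOn ω c E} = ∏ i ∈ E.toFinset, (ν i).real {c i} := by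
    have h := Measure.infinitePi_pi ν (s := E.toFinset) fun i _ => measurableSet_singleton (c i)
    rw [Measure.infinitePi_eq_pi, Set.coe_toFinset] at h
    exact (congrArg ENNReal.toReal h).trans (ENNReal.toReal_prod ..)
  have hpow : a ^ k ≤ (Measure.pi ν).real {ω | Set.EqOn ω c E} :=
    calc a ^ k ≤ a ^ #E.toFinset :=
          pow_le_pow_of_le_one ha0 ha1 (by rwa [← Set.ncard_eq_toFinset_card'])
      _ = ∏ _i ∈ E.toFinset, a := (prod_const a).symm
      _ ≤ _ := (prod_le_prod (fun _ _ => ha0) fun i _ => hac i).trans_eq hbox.symm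
  calc _ = 1 - (Measure.pi ν).real {ω | Set.EqOn ω c E} := probReal_compl_eq_one_sub hmeas
    _ ≤ _ := by gcongr

end Independence

section Selection

variable {Ω Θ : Type*} [MeasurableSpace Ω] {μ : Measure Ω} [IsProbabilityMeasure μ]

lemma measureReal_mem_apply_le_of_indepSet [Finite Θ] {T : Ω → Θ} {B : Θ → Set Ω} {δ : ℝ}
    (hT : ∀ θ, MeasurableSet (T ⁻¹' {θ})) (hTB : ∀ θ, IndepSet (T ⁻¹' {θ}) (B θ) μ)
    (hB : ∀ θ, μ.real (B θ) ≤ δ) : μ.real {ω | ω ∈ B (T ω)} ≤ δ := by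
  have := Fintype.ofFinite Θ
  have hcover : {ω | ω ∈ B (T ω)} ⊆ ⋃ θ, T ⁻¹' {θ} ∩ B θ :=
    fun ω hω => Set.mem_iUnion.2 ⟨T ω, rfl, hω⟩
  calc μ.real {ω | ω ∈ B (T ω)}
      ≤ ∑ θ, μ.real (T ⁻¹' {θ} ∩ B θ) :=
        (measureReal_mono hcover).trans (measureReal_iUnion_fintype_le _)
    _ ≤ ∑ θ, μ.real (T ⁻¹' {θ}) * δ := by
        refine Finset.sum_le_sum fun θ _ => ?_
        rw [Measure.real, (hTB θ).measure_inter_eq_mul, ENNReal.toReal_mul]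
        exact mul_le_mul_of_nonneg_left (hB θ) measureReal_nonneg
    _ = δ := by
        rw [← Finset.sum_mul, sum_measureReal_preimage_singleton _ fun θ _ => hT θ,
          Finset.coe_univ, Set.preimage_univ, probReal_univ, one_mul]

end Selection

section PerfectMatching

lemma choose_mul_choose_mul_pow_le {t s u : ℕ} (hsu : s + u = t + 1) (hs : 1 ≤ s) (hu : 1 ≤ u)
    {y : ℝ} (hy0 : 0 ≤ y) (hy1 : y ≤ 1) (hy : (t : ℝ) ^ 2 * y ^ (t / 2) ≤ 1) :
    (t.choose s : ℝ) * t.choose u * y ^ (s * u) ≤ (t : ℝ) ^ 2 * y ^ (t / 2) := by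
  wlog hle : s ≤ u generalizing s u
  · rw [mul_comm (t.choose s : ℝ), mul_comm s]
    exact this (by omega) hu hs (le_of_not_ge hle)
  have hchoose_s : (t.choose s : ℝ) ≤ (t : ℝ) ^ s := mod_cast Nat.choose_le_pow t s
  have hchoose_u : (t.choose u : ℝ) ≤ (t : ℝ) ^ s := by
    have : t.choose u ≤ t ^ s := by
      rw [← Nat.choose_symm (by omega)]
      exact (Nat.choose_le_pow t _).trans (Nat.pow_le_pow_right (by omega) (by omega))
    exact_mod_cast this
  calc (t.choose s : ℝ) * t.choose u * y ^ (s * u)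
      ≤ (t : ℝ) ^ s * (t : ℝ) ^ s * y ^ (s * (t / 2)) := by
        gcongr ?_ * ?_ * ?_
        exact pow_le_pow_of_le_one hy0 hy1 (Nat.mul_le_mul_left s (by omega))
    _ = ((t : ℝ) ^ 2 * y ^ (t / 2)) ^ s := by ring
    _ ≤ (t : ℝ) ^ 2 * y ^ (t / 2) := pow_le_of_le_one (by positivity) hy (by omega)

variable {τ : Type*} [Fintype τ]

lemma exists_rectangle_of_forall_perm {D : τ → τ → Prop}
    (hD : ∀ ρ : Equiv.Perm τ, ∃ i, D i (ρ i)) :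
    ∃ A U : Finset τ, #A + #U = Fintype.card τ + 1 ∧ ∀ i ∈ A, ∀ x ∈ U, D i x := by
  classical
  obtain ⟨A, hA⟩ : ∃ A : Finset τ, #{x | ∃ i ∈ A, ¬ D i x} < #A := by
    by_contra! hall
    obtain ⟨f, hf, hfD⟩ := (Fintype.all_card_le_filter_rel_iff_exists_injective _).1 hall
    obtain ⟨i, hi⟩ := hD (Equiv.ofBijective f (Finite.injective_iff_bijective.1 hf))
    exact hfD i hi
  have hcard := card_compl ({x | ∃ i ∈ A, ¬ D i x} : Finset τ)
  have hAcard := card_le_univ A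
  obtain ⟨U, hU, hUcard⟩ := exists_subset_card_eq
    (s := ({x | ∃ i ∈ A, ¬ D i x} : Finset τ)ᶜ) (n := Fintype.card τ + 1 - #A) (by omega)
  refine ⟨A, U, by omega, fun i hi x hx => ?_⟩
  have hx' := hU hx
  simp only [mem_compl, mem_filter_univ, not_exists, not_and, not_not] at hx'
  exact hx' i hi

variable {Ω : Type*} [MeasurableSpace Ω] {μ : Measure Ω} {D : τ → τ → Set Ω} {y : ℝ}

lemma measureReal_exists_rectangle_le (hD : iIndepSet (fun b : τ × τ => D b.1 b.2) μ)
    (hDy : ∀ i x, μ.real (D i x) ≤ y) (s u : ℕ) :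
    μ.real {ω | ∃ A U : Finset τ, #A = s ∧ #U = u ∧ ∀ i ∈ A, ∀ x ∈ U, ω ∈ D i x} ≤
      (Fintype.card τ).choose s * (Fintype.card τ).choose u * y ^ (s * u) := by
  have := hD.isProbabilityMeasure
  have hcover : {ω | ∃ A U : Finset τ, #A = s ∧ #U = u ∧ ∀ i ∈ A, ∀ x ∈ U, ω ∈ D i x} ⊆
      ⋃ P ∈ powersetCard s univ ×ˢ powersetCard u univ, ⋂ b ∈ P.1 ×ˢ P.2, D b.1 b.2 := by
    rintro ω ⟨A, U, hA, hU, h⟩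
    refine Set.mem_biUnion (x := (A, U)) (by simp [hA, hU]) ?_
    simpa only [Set.mem_iInter, mem_product, and_imp, Prod.forall] using
      fun i x hi hx => h i hi x hx
  calc _ ≤ ∑ P ∈ powersetCard s univ ×ˢ powersetCard u univ,
        μ.real (⋂ b ∈ P.1 ×ˢ P.2, D b.1 b.2) :=
        (measureReal_mono hcover (measure_ne_top μ _)).trans (measureReal_biUnion_finset_le _ _)
    _ ≤ ∑ _P ∈ powersetCard s (univ : Finset τ) ×ˢ powersetCard u (univ : Finset τ),
        y ^ (s * u) := by
        refine sum_le_sum fun P hP => ?_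
        simp only [mem_product, mem_powersetCard_univ] at hP
        rw [Measure.real, hD.meas_biInter, ENNReal.toReal_prod, ← hP.1, ← hP.2, ← card_product]
        exact (prod_le_prod (fun _ _ => measureReal_nonneg) fun b _ => hDy b.1 b.2).trans_eq
          (prod_const y)
    _ = _ := by simp

lemma measureReal_forall_perm_exists_le (hD : iIndepSet (fun b : τ × τ => D b.1 b.2) μ)
    (hy0 : 0 ≤ y) (hy1 : y ≤ 1) (hDy : ∀ i x, μ.real (D i x) ≤ y) :
    μ.real {ω | ∀ ρ : Equiv.Perm τ, ∃ i, ω ∈ D i (ρ i)} ≤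
      (Fintype.card τ : ℝ) ^ 3 * y ^ (Fintype.card τ / 2) := by
  have := hD.isProbabilityMeasure
  set t := Fintype.card τ
  rcases le_or_gt ((t : ℝ) ^ 2 * y ^ (t / 2)) 1 with hy | hy
  · have hcover : {ω | ∀ ρ : Equiv.Perm τ, ∃ i, ω ∈ D i (ρ i)} ⊆ ⋃ s ∈ Icc 1 t,
        {ω | ∃ A U : Finset τ, #A = s ∧ #U = t + 1 - s ∧ ∀ i ∈ A, ∀ x ∈ U, ω ∈ D i x} := by
      intro ω hω
      obtain ⟨A, U, hAU, h⟩ := exists_rectangle_of_forall_perm (D := fun i x => ω ∈ D i x) hω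
      have hA := card_le_univ A
      have hU := card_le_univ U
      exact Set.mem_biUnion (x := #A) (mem_Icc.2 (by omega)) ⟨A, U, rfl, by omega, h⟩
    calc _ ≤ ∑ s ∈ Icc 1 t, μ.real
          {ω | ∃ A U : Finset τ, #A = s ∧ #U = t + 1 - s ∧ ∀ i ∈ A, ∀ x ∈ U, ω ∈ D i x} :=
          (measureReal_mono hcover (measure_ne_top μ _)).trans (measureReal_biUnion_finset_le _ _)
      _ ≤ ∑ _s ∈ Icc 1 t, (t : ℝ) ^ 2 * y ^ (t / 2) := by
          refine sum_le_sum fun s hs => ?_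
          rw [mem_Icc] at hs
          exact (measureReal_exists_rectangle_le hD hDy s _).trans
            (choose_mul_choose_mul_pow_le (by omega) hs.1 (by omega) hy0 hy1 hy)
      _ = (t : ℝ) ^ 3 * y ^ (t / 2) := by
          rw [sum_const, Nat.card_Icc, Nat.add_sub_cancel, nsmul_eq_mul]
          ring
  · have ht1 : (1 : ℝ) ≤ t := by
      rw [Nat.one_le_cast, Nat.one_le_iff_ne_zero]
      intro h0
      norm_num [h0] at hy
    calc _ ≤ (1 : ℝ) := measureReal_le_one
      _ ≤ (t : ℝ) ^ 2 * y ^ (t / 2) := hy.le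
      _ ≤ (t : ℝ) ^ 3 * y ^ (t / 2) := by gcongr; norm_num

end PerfectMatching

section Columns

variable {β τ : Type*} {N : ℕ} {v : β × τ ↪ Fin N} {J : Finset β} {σ : β → Equiv.Perm τ} {b : β}

/-- The potential edges inside row `i` of the columns in `J`, when the vertices `v (a, ·)` of
column `a` have been permuted by `σ a`. -/
def rowEdges (v : β × τ ↪ Fin N) (J : Finset β) (σ : β → Equiv.Perm τ) (i : τ) :
    Set (EdgeType N) :=
  {e | ∃ a ∈ J, ∃ b ∈ J, e.1 = s(v (a, σ a i), v (b, σ b i))}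

/-- The potential edges joining the vertex `v (b, x)` to row `i` of the columns in `J`, when these
have been permuted by `σ`. -/
def starEdges (v : β × τ ↪ Fin N) (J : Finset β) (σ : β → Equiv.Perm τ) (b : β) (i x : τ) :
    Set (EdgeType N) :=
  {e | ∃ a ∈ J, e.1 = s(v (a, σ a i), v (b, x))}

lemma rowEdges_insert_update_subset [DecidableEq β] (hb : b ∉ J) (ρ : Equiv.Perm τ) (i : τ) :
    rowEdges v (insert b J) (update σ b ρ) i ⊆ rowEdges v J σ i ∪ starEdges v J σ b i (ρ i) := by
  rintro ⟨e, hdiag⟩ ⟨a, ha, a', ha', he⟩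
  have hupdate {a : β} (ha : a ∈ J) : update σ b ρ a = σ a :=
    update_of_ne (ne_of_mem_of_not_mem ha hb) ..
  rcases mem_insert.1 ha with hab | haJ <;> rcases mem_insert.1 ha' with hab' | haJ'
  · exact absurd (by rw [show e = _ from he, hab, hab']; rfl) hdiag
  · exact Or.inr ⟨a', haJ', by rw [he, hab, update_self, hupdate haJ', Sym2.eq_swap]⟩
  · exact Or.inr ⟨a, haJ, by rw [he, hab', update_self, hupdate haJ]⟩
  · exact Or.inl ⟨a, haJ, a', haJ', by rw [he, hupdate haJ, hupdate haJ']⟩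

lemma pairwise_disjoint_starEdges (hb : b ∉ J) :
    Pairwise (Disjoint on fun q : τ × τ => starEdges v J σ b q.1 q.2) := by
  refine fun q q' hqq' => Set.disjoint_left.2 ?_
  rintro e ⟨a, ha, he⟩ ⟨a', ha', he'⟩
  rw [he, Sym2.eq_iff] at he'
  simp only [v.injective.eq_iff, Prod.mk.injEq] at he'
  rcases he' with ⟨⟨rfl, hi⟩, -, hx⟩ | ⟨⟨rfl, -⟩, -⟩
  · exact hqq' (Prod.ext ((σ a).injective hi) hx)
  · exact hb ha

lemma disjoint_rowEdges_starEdges (hb : b ∉ J) (σ' : β → Equiv.Perm τ) (i i' x : τ) :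
    Disjoint (rowEdges v J σ' i') (starEdges v J σ b i x) := by
  refine Set.disjoint_left.2 ?_
  rintro e ⟨a, ha, a', ha', he⟩ ⟨a'', -, he'⟩
  rw [he, Sym2.eq_iff] at he'
  simp only [v.injective.eq_iff, Prod.mk.injEq] at he'
  rcases he' with ⟨-, rfl, -⟩ | ⟨⟨rfl, -⟩, -⟩
  · exact hb ha'
  · exact hb ha

lemma ncard_starEdges_le (i x : τ) : (starEdges v J σ b i x).ncard ≤ #J := by
  have himage : Subtype.val '' starEdges v J σ b i x ⊆
      (fun a => s(v (a, σ a i), v (b, x))) '' J := by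
    rintro _ ⟨e, ⟨a, ha, he⟩, rfl⟩
    exact ⟨a, ha, he.symm⟩
  rw [← Set.ncard_image_of_injective _ Subtype.val_injective, ← Set.ncard_coe_finset]
  exact (Set.ncard_le_ncard himage).trans Set.ncard_image_le

/-- Permutations of the columns in `J` for which every row agrees with the pattern `c`, whenever
such permutations exist (and arbitrary ones otherwise). -/
noncomputable def arrangement (c : EdgeType N → Bool) (v : β × τ ↪ Fin N) (J : Finset β)
    (ω : EdgeType N → Bool) : β → Equiv.Perm τ :=
  Classical.epsilon fun σ => ∀ i, Set.EqOn ω c (rowEdges v J σ i)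

lemma dependsOn_arrangement (c : EdgeType N → Bool) (v : β × τ ↪ Fin N) (J : Finset β) :
    DependsOn (arrangement c v J) (⋃ σ : β → Equiv.Perm τ, ⋃ i, rowEdges v J σ i) := by
  refine fun ω ω' h => congrArg Classical.epsilon ?_
  refine funext fun σ => propext (forall_congr' fun i => iff_of_eq ?_)
  exact dependsOn_eqOn c _ fun e he => h e (Set.mem_iUnion₂.2 ⟨σ, i, he⟩)

lemma forall_perm_exists_not_eqOn_starEdges [DecidableEq β] {c ω : EdgeType N → Bool} (hb : b ∉ J)
    (hJ : ∃ σ : β → Equiv.Perm τ, ∀ i, Set.EqOn ω c (rowEdges v J σ i))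
    (hω : ∀ σ : β → Equiv.Perm τ, ∃ i, ¬ Set.EqOn ω c (rowEdges v (insert b J) σ i))
    (ρ : Equiv.Perm τ) :
    ∃ i, ¬ Set.EqOn ω c (starEdges v J (arrangement c v J ω) b i (ρ i)) := by
  have hrow : ∀ i, Set.EqOn ω c (rowEdges v J (arrangement c v J ω) i) := Classical.epsilon_spec hJ
  obtain ⟨i, hi⟩ := hω (update (arrangement c v J ω) b ρ)
  exact ⟨i, fun hstar => hi <|
    (Set.eqOn_union.2 ⟨hrow i, hstar⟩).mono (rowEdges_insert_update_subset hb ρ i)⟩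

variable {ν : EdgeType N → Measure Bool} [∀ e, IsProbabilityMeasure (ν e)]
  {c : EdgeType N → Bool} {a : ℝ}

lemma indepSet_arrangement [Finite β] [Finite τ] (hb : b ∉ J) (σ : β → Equiv.Perm τ) :
    IndepSet (arrangement c v J ⁻¹' {σ})
      {ω | ∀ ρ : Equiv.Perm τ, ∃ i, ¬ Set.EqOn ω c (starEdges v J σ b i (ρ i))}
      (Measure.pi ν) := by
  refine indepSet_pi_of_dependsOn (T := ⋃ i, ⋃ x, starEdges v J σ b i x)
    (Set.toFinite _).measurableSet (Set.toFinite _).measurableSet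
    (fun ω ω' h => congrArg (· ∈ ({σ} : Set _)) (dependsOn_arrangement c v J h)) ?_ ?_
  · refine fun ω ω' h => propext (forall_congr' fun ρ => exists_congr fun i => not_congr ?_)
    exact iff_of_eq (dependsOn_eqOn c _ fun e he => h e (Set.mem_iUnion₂.2 ⟨i, ρ i, he⟩))
  · simp only [Set.disjoint_iUnion_left, Set.disjoint_iUnion_right]
    exact fun i x σ' i' => disjoint_rowEdges_starEdges hb σ' i i' x

variable [Fintype τ]

lemma measureReal_forall_perm_exists_not_eqOn_starEdges_le (hb : b ∉ J) (ha0 : 0 ≤ a) (ha1 : a ≤ 1)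
    (hac : ∀ e, a ≤ (ν e).real {c e}) {k : ℕ} (hJ : #J ≤ k) :
    (Measure.pi ν).real
        {ω | ∀ ρ : Equiv.Perm τ, ∃ i, ¬ Set.EqOn ω c (starEdges v J σ b i (ρ i))} ≤
      (Fintype.card τ : ℝ) ^ 3 * (1 - a ^ k) ^ (Fintype.card τ / 2) := by
  refine measureReal_forall_perm_exists_le
    (D := fun i x => {ω | ¬ Set.EqOn ω c (starEdges v J σ b i x)}) ?_
    (sub_nonneg.2 (pow_le_one₀ ha0 ha1)) (sub_le_self _ (by positivity))
    fun i x => measureReal_pi_not_eqOn_le ha0 ha1 hac ((ncard_starEdges_le i x).trans hJ)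
  exact iIndepSet_pi_of_dependsOn (fun q => (Set.toFinite _).measurableSet)
    (fun q _ _ h => congrArg Not (dependsOn_eqOn c _ h)) (pairwise_disjoint_starEdges hb)

lemma measureReal_forall_exists_not_eqOn_rowEdges_le [Fintype β] (ha0 : 0 ≤ a) (ha1 : a ≤ 1)
    (hac : ∀ e, a ≤ (ν e).real {c e}) (J : Finset β) :
    (Measure.pi ν).real {ω | ∀ σ : β → Equiv.Perm τ, ∃ i, ¬ Set.EqOn ω c (rowEdges v J σ i)} ≤
      #J * ((Fintype.card τ : ℝ) ^ 3 *
        (1 - a ^ Fintype.card β) ^ (Fintype.card τ / 2)) := by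
  classical
  induction J using Finset.induction_on with
  | empty => simp [rowEdges]
  | insert b J hb ih =>
    let B (σ : β → Equiv.Perm τ) : Set (EdgeType N → Bool) :=
      {ω | ∀ ρ : Equiv.Perm τ, ∃ i, ¬ Set.EqOn ω c (starEdges v J σ b i (ρ i))}
    have hsplit : {ω | ∀ σ, ∃ i, ¬ Set.EqOn ω c (rowEdges v (insert b J) σ i)} ⊆
        {ω | ∀ σ, ∃ i, ¬ Set.EqOn ω c (rowEdges v J σ i)} ∪
          {ω | ω ∈ B (arrangement c v J ω)} := fun ω hω =>
      or_iff_not_imp_left.2 fun hJ =>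
        forall_perm_exists_not_eqOn_starEdges hb (by simpa using hJ) hω
    have hB : (Measure.pi ν).real {ω | ω ∈ B (arrangement c v J ω)} ≤ _ :=
      measureReal_mem_apply_le_of_indepSet (fun _ => (Set.toFinite _).measurableSet)
        (indepSet_arrangement hb) fun σ =>
          measureReal_forall_perm_exists_not_eqOn_starEdges_le hb ha0 ha1 hac J.card_le_univ
    refine (measureReal_mono hsplit).trans ((measureReal_union_le _ _).trans ?_)
    refine (add_le_add ih hB).trans_eq ?_
    rw [card_insert_of_notMem hb]
    push_cast
    ring

end Columns

section InducedFactor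

variable {V β : Type*}

/-- `Γ` has an induced `H`-factor: vertex-disjoint induced copies of `H` covering all vertices
of `Γ`. -/
def HasInducedFactor (H : SimpleGraph β) (Γ : SimpleGraph V) : Prop :=
  ∃ (t : ℕ) (g : Fin t → H ↪g Γ), Bijective fun q : Fin t × β => g q.1 q.2

lemma bijective_uncurry_iff {κ : Type*} {g : κ → β → V} :
    Bijective (fun q : κ × β => g q.1 q.2) ↔ (∀ i, Injective (g i)) ∧
      (Set.univ : Set κ).PairwiseDisjoint (fun i => Set.range (g i)) ∧
      ⋃ i, Set.range (g i) = Set.univ := by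
  have hsurj : Surjective (fun q : κ × β => g q.1 q.2) ↔ ⋃ i, Set.range (g i) = Set.univ := by
    simp only [Surjective, Prod.exists, Set.eq_univ_iff_forall, Set.mem_iUnion, Set.mem_range]
  rw [Bijective, hsurj, ← and_assoc]
  refine and_congr_left' ⟨fun h => ⟨fun i a b hab => ?_, fun i _ j _ hij => ?_⟩, ?_⟩
  · exact (Prod.mk.inj (@h (i, a) (i, b) hab)).2
  · refine Set.disjoint_left.2 ?_
    rintro _ ⟨a, rfl⟩ ⟨b, hab⟩
    exact hij (Prod.mk.inj (@h (j, b) (i, a) hab)).1.symm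
  · rintro ⟨hinj, hdisj⟩ ⟨i, a⟩ ⟨j, b⟩ hab
    obtain rfl : i = j := hdisj.elim_set trivial trivial _ ⟨a, rfl⟩ ⟨b, hab.symm⟩
    exact congrArg (Prod.mk i) (hinj i hab)

lemma hasInducedCycleFactorOn_univ_iff {N k : ℕ} {Γ : SimpleGraph (Fin N)} :
    HasInducedCycleFactorOn Γ k Set.univ ↔ HasInducedFactor (cycGraph k) Γ := by
  constructor
  · rintro ⟨t, g, hinj, hdisj, hcover, hadj⟩
    exact ⟨t, fun i => ⟨⟨g i, hinj i⟩, fun {a b} => hadj i a b⟩,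
      bijective_uncurry_iff.2 ⟨hinj, hdisj, hcover⟩⟩
  · rintro ⟨t, g, hg⟩
    obtain ⟨hinj, hdisj, hcover⟩ := (bijective_uncurry_iff (g := fun i => ⇑(g i))).1 hg
    exact ⟨t, fun i => g i, hinj, hdisj, hcover, fun i _ _ => (g i).map_adj_iff⟩

open Classical in
/-- The edge indicators of the blow-up of `H` whose vertices `v (b, x)` replace the vertex `b`. -/
noncomputable def blowUp {τ : Type*} {N : ℕ} (H : SimpleGraph β) (v : β × τ ≃ Fin N)
    (e : EdgeType N) : Bool :=
  decide (e.1 ∈ (H.comap fun w => (v.symm w).1).edgeSet)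

lemma graphOf_adj {N : ℕ} {ω : EdgeType N → Bool} {x y : Fin N} :
    (graphOf ω).Adj x y ↔ ∃ h : ¬ s(x, y).IsDiag, ω ⟨s(x, y), h⟩ = true := by
  simp [graphOf]

variable [Fintype β] {H : SimpleGraph β}

lemma hasInducedFactor_graphOf_of_eqOn {t N : ℕ} {v : β × Fin t ≃ Fin N}
    {σ : β → Equiv.Perm (Fin t)} {ω : EdgeType N → Bool}
    (h : ∀ i, Set.EqOn ω (blowUp H v) (rowEdges v.toEmbedding univ σ i)) :
    HasInducedFactor H (graphOf ω) := by
  have hadj (i : Fin t) {a b : β} :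
      (graphOf ω).Adj (v (a, σ a i)) (v (b, σ b i)) ↔ H.Adj a b := by
    have hpattern (hdiag) :
        ω ⟨s(v (a, σ a i), v (b, σ b i)), hdiag⟩ = true ↔ H.Adj a b := by
      rw [h i ⟨a, mem_univ a, b, mem_univ b, rfl⟩]
      simp [blowUp]
    simp only [graphOf_adj, hpattern, exists_prop, and_iff_right_iff_imp]
    intro hab
    simp [hab.ne]
  have hinj (i : Fin t) : Injective fun b => v (b, σ b i) :=
    fun a b hab => congrArg Prod.fst (v.injective hab)
  refine ⟨t, fun i => ⟨⟨fun b => v (b, σ b i), hinj i⟩, hadj i⟩, ?_, fun w => ?_⟩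
  · rintro ⟨i, a⟩ ⟨i', a'⟩ hv
    obtain ⟨rfl, hσ⟩ := Prod.mk.inj (v.injective hv)
    exact congrArg (·, a) ((σ a).injective hσ)
  · obtain ⟨⟨b, x⟩, rfl⟩ := v.surjective w
    exact ⟨((σ b).symm x, b), by simp⟩

instance (N : ℕ) (p : ℝ) : IsProbabilityMeasure (erMeasure N p) := by
  unfold erMeasure
  infer_instance

lemma erMeasure_eq_pi_bernoulliMeasure {p : ℝ} (hp0 : 0 ≤ p) (hp1 : p ≤ 1) (N : ℕ) :
    erMeasure N p = Measure.pi fun _ => bernoulliMeasure true false ⟨p, hp0, hp1⟩ := by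
  have hmin : min p.toNNReal 1 = p.toNNReal := min_eq_left (by simpa using hp1)
  have htrue : p.toNNReal = unitInterval.toNNReal ⟨p, hp0, hp1⟩ := Real.toNNReal_of_nonneg hp0
  have hfalse : 1 - p.toNNReal = unitInterval.toNNReal (unitInterval.symm ⟨p, hp0, hp1⟩) :=
    NNReal.eq (by simp [NNReal.coe_sub, hp0, hp1])
  refine congrArg Measure.pi (funext fun _ => Measure.ext_of_singleton fun b => ?_)
  rw [PMF.toMeasure_apply_singleton _ _ (measurableSet_singleton b),
    bernoulliMeasure_apply _ (measurableSet_singleton b)]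
  cases b
  · change ((1 - min p.toNNReal 1 : NNReal) : ENNReal) = _
    simp [hmin, hfalse]
  · change ((min p.toNNReal 1 : NNReal) : ENNReal) = _
    rw [hmin, htrue]
    simp

lemma min_le_measureReal_bernoulliMeasure_singleton (p : unitInterval) (b : Bool) :
    min (p : ℝ) (1 - p) ≤ (bernoulliMeasure true false p).real {b} := by
  rw [bernoulliMeasure_real_apply _ (measurableSet_singleton b)]
  cases b <;> simp

lemma measureReal_not_hasInducedFactor_le (H : SimpleGraph β) {p : ℝ} (hp0 : 0 ≤ p)
    (hp1 : p ≤ 1) {t N : ℕ} (hN : Fintype.card β * t = N) :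
    (erMeasure N p).real {ω | ¬ HasInducedFactor H (graphOf ω)} ≤
      Fintype.card β * ((t : ℝ) ^ 3 * (1 - min p (1 - p) ^ Fintype.card β) ^ (t / 2)) := by
  let v : β × Fin t ≃ Fin N := Fintype.equivFinOfCardEq (by simpa using hN)
  have hsub : {ω : EdgeType N → Bool | ¬ HasInducedFactor H (graphOf ω)} ⊆
      {ω | ∀ σ, ∃ i, ¬ Set.EqOn ω (blowUp H v) (rowEdges v.toEmbedding univ σ i)} := by
    intro ω hω σ
    by_contra! h
    exact hω (hasInducedFactor_graphOf_of_eqOn h)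
  rw [erMeasure_eq_pi_bernoulliMeasure hp0 hp1]
  refine (measureReal_mono hsub).trans ?_
  simpa using measureReal_forall_exists_not_eqOn_rowEdges_le (v := v.toEmbedding)
    (le_min hp0 (sub_nonneg.2 hp1)) ((min_le_left _ _).trans hp1)
    (fun e => min_le_measureReal_bernoulliMeasure_singleton ⟨p, hp0, hp1⟩ (blowUp H v e)) univ

end InducedFactor

section Asymptotics

lemma tendsto_pow_mul_pow_half (d : ℕ) {y : ℝ} (hy0 : 0 ≤ y) (hy1 : y < 1) :
    Tendsto (fun t : ℕ => (t : ℝ) ^ d * y ^ (t / 2)) atTop (nhds 0) := by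
  have hhalf := ((tendsto_pow_const_mul_const_pow_of_lt_one d hy0 hy1).comp
    (Nat.tendsto_div_const_atTop two_ne_zero)).const_mul (3 ^ d)
  rw [mul_zero] at hhalf
  refine squeeze_zero' (.of_forall fun t => by positivity) ?_ hhalf
  filter_upwards [eventually_ge_atTop 2] with t ht
  have ht3 : (t : ℝ) ≤ 3 * (t / 2 : ℕ) := mod_cast (by omega : t ≤ 3 * (t / 2))
  calc (t : ℝ) ^ d * y ^ (t / 2) ≤ (3 * (t / 2 : ℕ)) ^ d * y ^ (t / 2) := by gcongr
    _ = 3 ^ d * ((t / 2 : ℕ) ^ d * y ^ (t / 2)) := by ring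

lemma tendsto_div_log_atTop : Tendsto (fun x : ℝ => x / log x) atTop atTop := by
  refine ((tendsto_exp_div_pow_atTop 1).comp tendsto_log_atTop).congr' ?_
  filter_upwards [eventually_gt_atTop 0] with x hx
  simp [exp_log hx]

lemma tendsto_atTop_of_mul_div_log_le {ℓ : ℕ → ℕ} {c : ℝ} (hc : 0 < c)
    (hℓ : ∀ᶠ n : ℕ in atTop, c * n / log n ≤ ℓ n) : Tendsto ℓ atTop atTop := by
  rw [← tendsto_natCast_atTop_iff (R := ℝ)]
  refine tendsto_atTop_mono' _ hℓ ?_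
  simp only [mul_div_assoc]
  exact (tendsto_div_log_atTop.comp tendsto_natCast_atTop_atTop).const_mul_atTop hc

end Asymptotics

theorem random_graph_induced_cycle_factor_general {β : Type*} [Fintype β] [Nonempty β]
    (H : SimpleGraph β) {p : ℝ} (hp0 : 0 < p) (hp1 : p < 1) {α : Type*} {l : Filter α}
    {ℓ : α → ℕ} (hℓ : Tendsto ℓ l atTop) (hdvd : ∀ᶠ n in l, Fintype.card β ∣ ℓ n) :
    Tendsto (fun n => erMeasure (ℓ n) p {ω | HasInducedFactor H (graphOf ω)}) l (nhds 1) := by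
  have hk : 0 < Fintype.card β := Fintype.card_pos
  have hmin : 0 < min p (1 - p) := lt_min hp0 (sub_pos.2 hp1)
  have hbound := ((tendsto_pow_mul_pow_half 3 (y := 1 - min p (1 - p) ^ Fintype.card β)
    (sub_nonneg.2 (pow_le_one₀ hmin.le ((min_le_left _ _).trans hp1.le)))
    (sub_lt_self _ (by positivity))).comp
      ((Nat.tendsto_div_const_atTop hk.ne').comp hℓ)).const_mul (Fintype.card β : ℝ)
  rw [mul_zero] at hbound
  have hfail : Tendsto (fun n => (erMeasure (ℓ n) p).real {ω | ¬ HasInducedFactor H (graphOf ω)})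
      l (nhds 0) := by
    refine squeeze_zero' (.of_forall fun _ => measureReal_nonneg) ?_ hbound
    filter_upwards [hdvd] with n hn
    exact measureReal_not_hasInducedFactor_le H hp0.le hp1.le (Nat.mul_div_cancel' hn)
  rw [← ENNReal.tendsto_toReal_iff (fun _ => measure_ne_top _ _) ENNReal.one_ne_top,
    ENNReal.toReal_one, ← sub_zero (1 : ℝ)]
  refine (hfail.const_sub 1).congr fun n => ?_
  have hcompl := probReal_compl_eq_one_sub (μ := erMeasure (ℓ n) p)
    (Set.toFinite {ω | ¬ HasInducedFactor H (graphOf ω)}).measurableSet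
  rw [← hcompl, Set.compl_ofPred]
  simp only [not_not, Measure.real]

/-- For fixed `p ∈ (0,1)`, `m ≥ 5` and `ℓ(n)` divisible by `m−2`
with `c₁·n/ln n ≤ ℓ(n) ≤ c₂·n/ln n`, whp `G(ℓ(n),p)` contains an induced
`C_{m−2}`-factor. -/
theorem random_graph_induced_cycle_factor (p : ℝ) (hp0 : 0 < p) (hp1 : p < 1)
    (m : ℕ) (hm : 5 ≤ m) (ℓ : ℕ → ℕ) (c₁ c₂ : ℝ) (hc₁ : 0 < c₁) (hc : c₁ ≤ c₂)
    (hdvd : ∀ n : ℕ, (m - 2) ∣ ℓ n)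
    (hlow : ∀ n : ℕ, 2 ≤ n → c₁ * n / Real.log n ≤ (ℓ n : ℝ))
    (hup : ∀ n : ℕ, 2 ≤ n → (ℓ n : ℝ) ≤ c₂ * n / Real.log n) :
    Tendsto (fun n : ℕ =>
      erMeasure (ℓ n) p
        {ω | HasInducedCycleFactorOn (graphOf ω) (m - 2) Set.univ})
      atTop (nhds 1) := by
  have : NeZero (m - 2) := ⟨by omega⟩
  have hℓ : Tendsto ℓ atTop atTop :=
    tendsto_atTop_of_mul_div_log_le hc₁ ((eventually_ge_atTop 2).mono hlow)
  simp only [hasInducedCycleFactorOn_univ_iff]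
  exact random_graph_induced_cycle_factor_general (cycGraph (m - 2)) hp0 hp1 hℓ
    (.of_forall fun n => by simpa only [ZMod.card] using hdvd n)
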